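/- For every m ≥ 2, let λ be the partition (2^m + 1, 3) of n = 2^m + 4. Then the image of C_n in the permutation group of SYT(λ), i.e., the subgroup generated by the Bender–Knuth involutions t_1,…,t_{n−1}, is the full symmetric group of the set SYT(λ). -/

import Mathlib

/-!
A standard Young tableau of shape `(N - 3, 3)` is determined by its second row `a < b < c`, and the
triples that occur are those with `2 ≤ a`, `4 ≤ b`, `6 ≤ c ≤ N` (`Ballot`). In this model the
Bender–Knuth involution `t_k` is `triplePerm N k`: it interchanges the values `k` and `k + 1`
whenever the result is again such a triple. The claim follows once the group `tripleGroup N`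
generated by the `t_k` is shown to contain every transposition of two such triples.

Write `s b c` for the transposition of `(2, b, c)` and `(3, b, c)` (`sTrans`). On tableaux with four boxes
`t_2 t_3` has order three on shape `(3, 1)` and order two on shape `(2, 2)`, so `(t_2 t_3) ^ 3` is
the product of all `s 4 c` with `6 ≤ c ≤ N` (`triplePerm_pow_three`). Conjugating it by `t_5 t_4`
gives `s 5 6` times the product of all `s 6 c` with `c ≥ 7`; conjugating once more by `t_4` only
changes `s 5 6` into `s 4 6`, so the quotient `s 5 6 * s 4 6` lies in the group (`s56_s46_mem`).
Further conjugations yield `s 4 c * s 4 6` for all `c` (`s4_s46_mem`). For even `N` the number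
`N - 5` of factors of `(t_2 t_3) ^ 3` is odd, so the transposition `s 4 6` itself lies in the group
(`s46_mem`).

Relating `x` and `y` when their transposition lies in the group defines an equivalence relation
invariant under the group. The class of `(2, 4, 6)` contains, for each `k`, some `x` with `t_k x`
also in the class, so it is stable under every `t_k`; as the action is transitive, it is everything
(`swap_mem_tripleGroup`).
-/

/-- A standard Young tableau of shape `μ`: a filling of the cells of `μ` by the
numbers `1, …, μ.card` (bijectively), strictly increasing along rows and columns,
with value `0` outside the diagram. -/
structure SYT (μ : YoungDiagram) where
  entry : ℕ → ℕ → ℕ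
  zero_outside : ∀ i j, (i, j) ∉ μ → entry i j = 0
  row_strict : ∀ i j1 j2, j1 < j2 → (i, j2) ∈ μ → entry i j1 < entry i j2
  col_strict : ∀ i1 i2 j, i1 < i2 → (i2, j) ∈ μ → entry i1 j < entry i2 j
  image_eq : μ.cells.image (fun c => entry c.1 c.2) = Finset.Icc 1 μ.card

theorem SYT.ext' {μ : YoungDiagram} {A B : SYT μ} (h : A.entry = B.entry) : A = B := by
  cases A; cases B; simp_all

/-- The involution of values swapping `k` and `k + 1`. -/
def swapVal (k x : ℕ) : ℕ := if x = k then k + 1 else if x = k + 1 then k else x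

theorem swapVal_invol (k : ℕ) : Function.Involutive (swapVal k) := by
  intro x; unfold swapVal; split_ifs <;> omega

open Classical in
/-- The Bender–Knuth involution `t_k` as a function: interchange the entries `k` and
`k + 1` if the result is again a standard Young tableau, and do nothing otherwise. -/
noncomputable def bkFun (μ : YoungDiagram) (k : ℕ) (T : SYT μ) : SYT μ :=
  if h : ∃ T' : SYT μ, T'.entry = fun i j => swapVal k (T.entry i j) then h.choose else T

theorem bkFun_pos {μ : YoungDiagram} {k : ℕ} {T : SYT μ}
    (h : ∃ T' : SYT μ, T'.entry = fun i j => swapVal k (T.entry i j)) :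
    (bkFun μ k T).entry = fun i j => swapVal k (T.entry i j) := by
  unfold bkFun; rw [dif_pos h]; exact h.choose_spec

theorem bkFun_neg {μ : YoungDiagram} {k : ℕ} {T : SYT μ}
    (h : ¬ ∃ T' : SYT μ, T'.entry = fun i j => swapVal k (T.entry i j)) :
    bkFun μ k T = T := by
  unfold bkFun; rw [dif_neg h]

theorem bkFun_invol (μ : YoungDiagram) (k : ℕ) : Function.Involutive (bkFun μ k) := by
  intro T
  by_cases h : ∃ T' : SYT μ, T'.entry = fun i j => swapVal k (T.entry i j)
  · have e1 : (bkFun μ k T).entry = fun i j => swapVal k (T.entry i j) := bkFun_pos h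
    have h2 : ∃ T'' : SYT μ, T''.entry = fun i j => swapVal k ((bkFun μ k T).entry i j) := by
      refine ⟨T, ?_⟩
      funext i j
      simp only [e1]
      exact (swapVal_invol k (T.entry i j)).symm
    apply SYT.ext'
    rw [bkFun_pos h2]
    funext i j
    simp only [e1]
    exact swapVal_invol k (T.entry i j)
  · rw [bkFun_neg h, bkFun_neg h]

/-- The Bender–Knuth involution `t_k` as a permutation of `SYT μ`. -/
noncomputable def BK (μ : YoungDiagram) (k : ℕ) : Equiv.Perm (SYT μ) :=
  (bkFun_invol μ k).toPerm

/-- The image of the cactus group `C_n` in the permutation group of `SYT μ`: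
the subgroup generated by the Bender–Knuth involutions `t_1, …, t_{n-1}`. -/
noncomputable def BKgroup (μ : YoungDiagram) : Subgroup (Equiv.Perm (SYT μ)) :=
  Subgroup.closure (BK μ '' Set.Icc 1 (μ.card - 1))

/-- The simultaneous Bender–Knuth involution `t_k` on pairs of tableaux. -/
noncomputable def BKpair (μ1 μ2 : YoungDiagram) (k : ℕ) : Equiv.Perm (SYT μ1 × SYT μ2) :=
  Equiv.prodCongr (BK μ1 k) (BK μ2 k)

/-- The image of the cactus group acting diagonally on pairs of tableaux. -/
noncomputable def BKpairGroup (μ1 μ2 : YoungDiagram) : Subgroup (Equiv.Perm (SYT μ1 × SYT μ2)) :=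
  Subgroup.closure (BKpair μ1 μ2 '' Set.Icc 1 (μ1.card - 1))

/-- The simultaneous Bender–Knuth involution `t_k` on triples of tableaux. -/
noncomputable def BKtriple (μ1 μ2 μ3 : YoungDiagram) (k : ℕ) :
    Equiv.Perm (SYT μ1 × SYT μ2 × SYT μ3) :=
  Equiv.prodCongr (BK μ1 k) (Equiv.prodCongr (BK μ2 k) (BK μ3 k))

/-- The image of the cactus group acting diagonally on triples of tableaux. -/
noncomputable def BKtripleGroup (μ1 μ2 μ3 : YoungDiagram) :
    Subgroup (Equiv.Perm (SYT μ1 × SYT μ2 × SYT μ3)) :=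
  Subgroup.closure (BKtriple μ1 μ2 μ3 '' Set.Icc 1 (μ1.card - 1))

/-- A partition is hook-shaped if its diagram has no box in position `(2,2)`
(in 1-indexed terms), i.e. no cell `(1,1)` in 0-indexed terms. -/
def HookShaped (μ : YoungDiagram) : Prop := (1, 1) ∉ μ

/-- A partition is almost hook-shaped if it is a hook plus the single box `(2,2)`. -/
def AlmostHookShaped (μ : YoungDiagram) : Prop :=
  (1, 1) ∈ μ ∧ (1, 2) ∉ μ ∧ (2, 1) ∉ μ

/-- The value `k` occurs in the first row of `A`. -/
def SYT.inFirstRow {μ : YoungDiagram} (A : SYT μ) (k : ℕ) : Prop :=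
  ∃ j, (0, j) ∈ μ ∧ A.entry 0 j = k

open scoped Classical in
/-- The set `S_{A,B}` of values lying in the first row of both `A` and `B`. -/
noncomputable def sharedFirstRow {μ1 μ2 : YoungDiagram} (A : SYT μ1) (B : SYT μ2) : Finset ℕ :=
  (Finset.Icc 1 μ1.card).filter (fun k => A.inFirstRow k ∧ B.inFirstRow k)

/-- Tableaux (possibly of different shapes) are equal, as fillings of the plane. -/
def EqTab {μ1 μ2 : YoungDiagram} (A : SYT μ1) (B : SYT μ2) : Prop := A.entry = B.entry

/-- `B` is the transpose of `A`. -/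
def EqTransposeTab {μ1 μ2 : YoungDiagram} (A : SYT μ1) (B : SYT μ2) : Prop :=
  ∀ i j, B.entry i j = A.entry j i

/-- A pair of partitions of the same `n` is viable if at most one of them is hook-shaped. -/
def ViablePairShape (μ1 μ2 : YoungDiagram) : Prop := ¬ (HookShaped μ1 ∧ HookShaped μ2)

/-- A pair of tableaux is viable if the pair of shapes is viable, the tableaux are
different and not transposes of each other. -/
def ViableTabPair {μ1 μ2 : YoungDiagram} (A : SYT μ1) (B : SYT μ2) : Prop :=
  ViablePairShape μ1 μ2 ∧ ¬ EqTab A B ∧ ¬ EqTransposeTab A B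

/-- A pair of partitions is base case if it is viable and either both are almost
hook-shaped or one is almost hook-shaped and the other is hook-shaped. -/
def BaseCasePair (μ1 μ2 : YoungDiagram) : Prop :=
  ViablePairShape μ1 μ2 ∧
    ((AlmostHookShaped μ1 ∧ AlmostHookShaped μ2) ∨
      (AlmostHookShaped μ1 ∧ HookShaped μ2) ∨ (HookShaped μ1 ∧ AlmostHookShaped μ2))

/-- A triple of partitions is viable if at most one of them is hook-shaped. -/
def ViableTripleShape (μ1 μ2 μ3 : YoungDiagram) : Prop :=
  ¬ (HookShaped μ1 ∧ HookShaped μ2) ∧ ¬ (HookShaped μ1 ∧ HookShaped μ3) ∧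
    ¬ (HookShaped μ2 ∧ HookShaped μ3)

/-- A triple of tableaux is viable if the shapes are viable, no two of the tableaux
are equal and no two are transposes of each other. -/
def ViableTabTriple {μ1 μ2 μ3 : YoungDiagram} (A : SYT μ1) (B : SYT μ2) (C : SYT μ3) : Prop :=
  ViableTripleShape μ1 μ2 μ3 ∧
    (¬ EqTab A B ∧ ¬ EqTab A C ∧ ¬ EqTab B C) ∧
    (¬ EqTransposeTab A B ∧ ¬ EqTransposeTab A C ∧ ¬ EqTransposeTab B C)

/-- A triple of partitions is base case if it is viable and either two of them are
almost hook-shaped, or one is almost hook-shaped and another one is hook-shaped. -/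
def BaseCaseTriple (μ1 μ2 μ3 : YoungDiagram) : Prop :=
  ViableTripleShape μ1 μ2 μ3 ∧
    ((AlmostHookShaped μ1 ∧ AlmostHookShaped μ2) ∨ (AlmostHookShaped μ1 ∧ AlmostHookShaped μ3) ∨
      (AlmostHookShaped μ2 ∧ AlmostHookShaped μ3) ∨
      (AlmostHookShaped μ1 ∧ (HookShaped μ2 ∨ HookShaped μ3)) ∨
      (AlmostHookShaped μ2 ∧ (HookShaped μ1 ∨ HookShaped μ3)) ∨
      (AlmostHookShaped μ3 ∧ (HookShaped μ1 ∨ HookShaped μ2)))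

/-- `A'` is the tableau obtained from `A` by deleting the box containing the largest
entry `n = μ.card`: its shape is contained in that of `A`, has one box fewer, and its
entries agree with those of `A`. -/
def IsRestriction {μ ν : YoungDiagram} (A : SYT μ) (A' : SYT ν) : Prop :=
  ν.cells ⊆ μ.cells ∧ ν.card + 1 = μ.card ∧ ∀ c ∈ ν.cells, A'.entry c.1 c.2 = A.entry c.1 c.2

/-- A box `c` of `μ` is a corner if some standard Young tableau of shape `μ` has the
largest entry `n = μ.card` in that box. -/
def IsCornerBox (μ : YoungDiagram) (c : ℕ × ℕ) : Prop :=
  c ∈ μ ∧ ∃ A : SYT μ, A.entry c.1 c.2 = μ.card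

/-- `μ` has at least two corners. -/
def HasTwoCorners (μ : YoungDiagram) : Prop :=
  ∃ c c' : ℕ × ℕ, c ≠ c' ∧ IsCornerBox μ c ∧ IsCornerBox μ c'

/-- The number of fixed points of a permutation of `SYT μ`. -/
noncomputable def fixedCount {μ : YoungDiagram} (g : Equiv.Perm (SYT μ)) : ℕ :=
  Nat.card {A : SYT μ // g A = A}

theorem swapVal_ne {k x : ℕ} (h1 : x ≠ k) (h2 : x ≠ k + 1) : swapVal k x = x := by
  simp [swapVal, h1, h2]

/-! ### Second rows as triples -/

/-- The triples `(a, b, c)` that are second rows of standard tableaux of shape `(N - 3, 3)`. -/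
def Ballot (N : ℕ) (x : ℕ × ℕ × ℕ) : Prop :=
  2 ≤ x.1 ∧ 4 ≤ x.2.1 ∧ 6 ≤ x.2.2 ∧ x.1 < x.2.1 ∧ x.2.1 < x.2.2 ∧ x.2.2 ≤ N

instance (N : ℕ) (x : ℕ × ℕ × ℕ) : Decidable (Ballot N x) := by
  unfold Ballot; infer_instance

/-- Interchange the values `k` and `k + 1` in a triple. -/
def swapTriple (k : ℕ) (x : ℕ × ℕ × ℕ) : ℕ × ℕ × ℕ :=
  (swapVal k x.1, swapVal k x.2.1, swapVal k x.2.2)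

theorem swapTriple_invol (k : ℕ) : Function.Involutive (swapTriple k) := by
  intro x
  simp [swapTriple, swapVal_invol k _]

/-- The Bender–Knuth involution on triples, extended by the identity to triples that are not
second rows of tableaux. -/
def tripleFun (N k : ℕ) (x : ℕ × ℕ × ℕ) : ℕ × ℕ × ℕ :=
  if Ballot N x ∧ Ballot N (swapTriple k x) then swapTriple k x else x

theorem tripleFun_invol (N k : ℕ) : Function.Involutive (tripleFun N k) := by
  intro x
  by_cases h : Ballot N x ∧ Ballot N (swapTriple k x)
  · have h1 : tripleFun N k x = swapTriple k x := if_pos h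
    rw [h1]
    unfold tripleFun
    rw [swapTriple_invol k x, if_pos ⟨h.2, h.1⟩]
  · have h1 : tripleFun N k x = x := if_neg h
    rw [h1, h1]

/-- The Bender–Knuth involution `t_k` as a permutation of `ℕ × ℕ × ℕ`. -/
def triplePerm (N k : ℕ) : Equiv.Perm (ℕ × ℕ × ℕ) := (tripleFun_invol N k).toPerm

theorem triplePerm_apply (N k : ℕ) (x : ℕ × ℕ × ℕ) : triplePerm N k x = tripleFun N k x := rfl

theorem triplePerm_inv (N k : ℕ) : (triplePerm N k)⁻¹ = triplePerm N k := by
  ext1 x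
  rw [Equiv.Perm.inv_eq_iff_eq]
  exact (tripleFun_invol N k x).symm

/-- The subgroup generated by the Bender–Knuth involutions on triples. -/
def tripleGroup (N : ℕ) : Subgroup (Equiv.Perm (ℕ × ℕ × ℕ)) :=
  Subgroup.closure (triplePerm N '' Set.Icc 1 (N - 1))

theorem triplePerm_mem {N k : ℕ} (h1 : 1 ≤ k) (h2 : k < N) : triplePerm N k ∈ tripleGroup N :=
  Subgroup.subset_closure ⟨k, ⟨h1, by omega⟩, rfl⟩

theorem triplePerm_move {N k a b c a' b' c' : ℕ} (h : Ballot N (a, b, c))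
    (h' : Ballot N (a', b', c')) (ha : swapVal k a = a') (hb : swapVal k b = b')
    (hc : swapVal k c = c') : triplePerm N k (a, b, c) = (a', b', c') := by
  subst ha hb hc
  exact if_pos ⟨h, h'⟩

theorem triplePerm_fix {N k : ℕ} {x : ℕ × ℕ × ℕ}
    (h : Ballot N x → Ballot N (swapTriple k x) → swapTriple k x = x) :
    triplePerm N k x = x := by
  rw [triplePerm_apply]
  unfold tripleFun
  split_ifs with h1
  · exact h h1.1 h1.2
  · rfl

/-! ### The transpositions `s b c` -/

/-- The transposition of `(2, b, c)` and `(3, b, c)`. -/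
def sTrans (b c : ℕ) : Equiv.Perm (ℕ × ℕ × ℕ) := Equiv.swap (2, b, c) (3, b, c)

/-- The product of the `s b c` with `7 ≤ c < 7 + j`. -/
def sProd (b : ℕ) : ℕ → Equiv.Perm (ℕ × ℕ × ℕ)
  | 0 => 1
  | j + 1 => sTrans b (7 + j) * sProd b j

theorem sTrans_apply (b c : ℕ) (x : ℕ × ℕ × ℕ) :
    sTrans b c x = if x.2 = (b, c) ∧ (x.1 = 2 ∨ x.1 = 3) then (5 - x.1, b, c) else x := by
  obtain ⟨p, q, r⟩ := x
  simp only [sTrans, Equiv.swap_apply_def, Prod.mk.injEq]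
  grind

theorem sProd_apply (b j : ℕ) (x : ℕ × ℕ × ℕ) :
    sProd b j x =
      if x.2.1 = b ∧ 7 ≤ x.2.2 ∧ x.2.2 < 7 + j ∧ (x.1 = 2 ∨ x.1 = 3) then (5 - x.1, x.2) else x := by
  obtain ⟨p, q, r⟩ := x
  induction j with
  | zero => simp only [sProd, Equiv.Perm.one_apply]; grind
  | succ j ih =>
    simp only [sProd, Equiv.Perm.mul_apply, ih, sTrans_apply]
    grind

theorem sTrans_mul_self (b c : ℕ) : sTrans b c * sTrans b c = 1 := Equiv.swap_mul_self _ _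

theorem triplePerm_pow_three {N : ℕ} (hN : 6 ≤ N) :
    (triplePerm N 2 * triplePerm N 3) ^ 3 = sProd 4 (N - 6) * sTrans 4 6 := by
  ext1 ⟨a, b, c⟩
  simp only [pow_succ, pow_zero, one_mul, Equiv.Perm.mul_apply, sProd_apply, sTrans_apply]
  by_cases hV : Ballot N (a, b, c)
  · have hV' := hV
    simp only [Ballot] at hV'
    obtain ⟨h1, h2, h3, h4, h5, h6⟩ := hV'
    have hb : ∀ k < 4, 5 ≤ b → swapVal k b = b := fun k hk h => swapVal_ne (by omega) (by omega)
    have hc : ∀ k < 4, swapVal k c = c := fun k hk => swapVal_ne (by omega) (by omega)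
    by_cases hb4 : b = 4
    · subst hb4
      have e1 : triplePerm N 3 (2, 4, c) = (2, 4, c) :=
        triplePerm_fix fun _ h => by simp [Ballot, swapTriple, swapVal] at h
      have e2 : triplePerm N 3 (3, 4, c) = (3, 4, c) :=
        triplePerm_fix fun _ h => by simp [Ballot, swapTriple, swapVal] at h
      have e3 : triplePerm N 2 (2, 4, c) = (3, 4, c) :=
        triplePerm_move (by simp only [Ballot]; omega) (by simp only [Ballot]; omega) rfl rfl
          (hc 2 (by omega))
      have e4 : triplePerm N 2 (3, 4, c) = (2, 4, c) :=
        triplePerm_move (by simp only [Ballot]; omega) (by simp only [Ballot]; omega) rfl rfl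
          (hc 2 (by omega))
      obtain rfl | rfl : a = 2 ∨ a = 3 := by omega
      · simp only [e1, e2, e3, e4]; grind
      · simp only [e1, e2, e3, e4]; grind
    · have hb5 : 5 ≤ b := by omega
      have hR : ∀ a, 2 ≤ a → a < 5 → Ballot N (a, b, c) := by
        intro a _ _; simp only [Ballot]; omega
      have e1 : triplePerm N 3 (2, b, c) = (2, b, c) :=
        triplePerm_move (hR _ (by omega) (by omega)) (hR _ (by omega) (by omega)) rfl
          (hb 3 (by omega) hb5) (hc 3 (by omega))
      have e2 : triplePerm N 3 (3, b, c) = (4, b, c) :=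
        triplePerm_move (hR _ (by omega) (by omega)) (hR _ (by omega) (by omega)) rfl
          (hb 3 (by omega) hb5) (hc 3 (by omega))
      have e3 : triplePerm N 3 (4, b, c) = (3, b, c) :=
        triplePerm_move (hR _ (by omega) (by omega)) (hR _ (by omega) (by omega)) rfl
          (hb 3 (by omega) hb5) (hc 3 (by omega))
      have e4 : triplePerm N 2 (2, b, c) = (3, b, c) :=
        triplePerm_move (hR _ (by omega) (by omega)) (hR _ (by omega) (by omega)) rfl
          (hb 2 (by omega) hb5) (hc 2 (by omega))
      have e5 : triplePerm N 2 (3, b, c) = (2, b, c) :=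
        triplePerm_move (hR _ (by omega) (by omega)) (hR _ (by omega) (by omega)) rfl
          (hb 2 (by omega) hb5) (hc 2 (by omega))
      have e6 : triplePerm N 2 (4, b, c) = (4, b, c) :=
        triplePerm_move (hR _ (by omega) (by omega)) (hR _ (by omega) (by omega)) rfl
          (hb 2 (by omega) hb5) (hc 2 (by omega))
      obtain rfl | rfl | rfl | ha : a = 2 ∨ a = 3 ∨ a = 4 ∨ 5 ≤ a := by omega
      · simp only [e1, e2, e3, e4, e5, e6]; grind
      · simp only [e1, e2, e3, e4, e5, e6]; grind
      · simp only [e1, e2, e3, e4, e5, e6]; grind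
      · have f2 : triplePerm N 2 (a, b, c) = (a, b, c) :=
          triplePerm_move hV hV (swapVal_ne (by omega) (by omega)) (hb 2 (by omega) hb5)
            (hc 2 (by omega))
        have f3 : triplePerm N 3 (a, b, c) = (a, b, c) :=
          triplePerm_move hV hV (swapVal_ne (by omega) (by omega)) (hb 3 (by omega) hb5)
            (hc 3 (by omega))
        simp only [f2, f3]; grind
  · have hfix : ∀ k, triplePerm N k (a, b, c) = (a, b, c) := fun k =>
      triplePerm_fix fun h => absurd h hV
    simp only [hfix]
    simp only [Ballot] at hV
    grind

/-- Conjugating `s b c` by `t_k`, for `k ≥ 4`, acts on the pair `(b, c)` alone. -/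
theorem conj_sTrans {N k b c b' c' : ℕ} (hk : 4 ≤ k) (h : Ballot N (3, b, c))
    (h' : Ballot N (3, b', c')) (hb : swapVal k b = b') (hc : swapVal k c = c') :
    triplePerm N k * sTrans b c * (triplePerm N k)⁻¹ = sTrans b' c' := by
  have h2 : Ballot N (2, b, c) := by simp only [Ballot] at h ⊢; omega
  have h2' : Ballot N (2, b', c') := by simp only [Ballot] at h' ⊢; omega
  rw [sTrans, ← Equiv.swap_apply_apply,
    triplePerm_move h2 h2' (swapVal_ne (by omega) (by omega)) hb hc,
    triplePerm_move h h' (swapVal_ne (by omega) (by omega)) hb hc, sTrans]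

/-- `t_k` commutes with `s b c` when `k` and `k + 1` cannot be interchanged in `(b, c)`. -/
theorem conj_sTrans_fix {N k b c : ℕ}
    (h : ¬ (4 ≤ swapVal k b ∧ 6 ≤ swapVal k c ∧ swapVal k b < swapVal k c)) :
    triplePerm N k * sTrans b c * (triplePerm N k)⁻¹ = sTrans b c := by
  have key : ∀ a, triplePerm N k (a, b, c) = (a, b, c) := fun a =>
    triplePerm_fix fun _ hh => absurd ⟨hh.2.1, hh.2.2.1, hh.2.2.2.2.1⟩ h
  rw [sTrans, ← Equiv.swap_apply_apply, key, key]

theorem conj_sProd {N k b b' : ℕ} (j : ℕ) (hj : j ≤ N - 6) (hk : 4 ≤ k) (hk' : k ≤ 5)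
    (hb : swapVal k b = b') (hb1 : 4 ≤ b) (hb2 : b ≤ 6) (hb1' : 4 ≤ b') (hb2' : b' ≤ 6) :
    triplePerm N k * sProd b j * (triplePerm N k)⁻¹ = sProd b' j := by
  induction j with
  | zero => simp [sProd]
  | succ j ih =>
    rw [sProd, ← conj_mul, ih (by omega), conj_sTrans (b' := b') (c' := 7 + j) hk _ _ hb
      (swapVal_ne (by omega) (by omega)), sProd]
    · simp only [Ballot]; omega
    · simp only [Ballot]; omega

theorem conj_mem {N k : ℕ} (h1 : 1 ≤ k) (h2 : k < N) {g : Equiv.Perm (ℕ × ℕ × ℕ)}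
    (hg : g ∈ tripleGroup N) : triplePerm N k * g * (triplePerm N k)⁻¹ ∈ tripleGroup N :=
  mul_mem (mul_mem (triplePerm_mem h1 h2) hg) (inv_mem (triplePerm_mem h1 h2))

theorem cube_mem {N : ℕ} (hN : 8 ≤ N) : sProd 4 (N - 6) * sTrans 4 6 ∈ tripleGroup N := by
  rw [← triplePerm_pow_three (by omega)]
  exact pow_mem (mul_mem (triplePerm_mem (by omega) (by omega))
    (triplePerm_mem (by omega) (by omega))) 3

theorem s56_s46_mem {N : ℕ} (hN : 8 ≤ N) : sTrans 5 6 * sTrans 4 6 ∈ tripleGroup N := by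
  have h1 : sProd 5 (N - 6) * sTrans 5 6 ∈ tripleGroup N := by
    have := conj_mem (k := 4) (by omega) (by omega) (cube_mem hN)
    rwa [← conj_mul, conj_sProd (b' := 5) _ le_rfl (by omega) (by omega) rfl (by omega) (by omega)
      (by omega) (by omega), conj_sTrans (b' := 5) (c' := 6) le_rfl
      (by simp only [Ballot]; omega) (by simp only [Ballot]; omega) rfl rfl] at this
  have h2 : sProd 6 (N - 6) * sTrans 5 6 ∈ tripleGroup N := by
    have := conj_mem (k := 5) (by omega) (by omega) h1
    rwa [← conj_mul, conj_sProd (b' := 6) _ le_rfl (by omega) (by omega) rfl (by omega) (by omega)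
      (by omega) (by omega), conj_sTrans_fix (by decide)] at this
  have h3 : sProd 6 (N - 6) * sTrans 4 6 ∈ tripleGroup N := by
    have := conj_mem (k := 4) (by omega) (by omega) h2
    rwa [← conj_mul, conj_sProd (b' := 6) _ le_rfl (by omega) (by omega) rfl (by omega) (by omega)
      (by omega) (by omega), conj_sTrans (b' := 4) (c' := 6) le_rfl
      (by simp only [Ballot]; omega) (by simp only [Ballot]; omega) rfl rfl] at this
  have h4 := mul_mem (inv_mem h2) h3
  have h5 : (sTrans 5 6)⁻¹ = sTrans 5 6 := Equiv.swap_inv _ _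
  rwa [mul_inv_rev, h5, mul_assoc, inv_mul_cancel_left] at h4

/-- Relating two involutions `s b c` when their product lies in the group is transitive. -/
theorem sTrans_mem_trans {N b c b' c' b'' c'' : ℕ} (h : sTrans b c * sTrans b' c' ∈ tripleGroup N)
    (h' : sTrans b' c' * sTrans b'' c'' ∈ tripleGroup N) :
    sTrans b c * sTrans b'' c'' ∈ tripleGroup N := by
  have := mul_mem h h'
  rwa [mul_assoc, ← mul_assoc (sTrans b' c'), sTrans_mul_self, one_mul] at this

theorem sTrans_mem_symm {N b c b' c' : ℕ} (h : sTrans b c * sTrans b' c' ∈ tripleGroup N) :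
    sTrans b' c' * sTrans b c ∈ tripleGroup N := by
  have := inv_mem h
  rw [mul_inv_rev] at this
  exact this

theorem s4_s46_mem {N : ℕ} (hN : 8 ≤ N) (j : ℕ) (hj : 7 + j ≤ N) :
    sTrans 4 (7 + j) * sTrans 4 6 ∈ tripleGroup N := by
  induction j with
  | zero =>
    have h1 : sTrans 5 7 * sTrans 4 7 ∈ tripleGroup N := by
      have := conj_mem (k := 6) (by omega) (by omega) (s56_s46_mem hN)
      rwa [← conj_mul, conj_sTrans (b' := 5) (c' := 7), conj_sTrans (b' := 4) (c' := 7)] at this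
      all_goals first | rfl | (simp only [Ballot]; omega) | omega
    have h2 : sTrans 6 7 * sTrans 4 7 ∈ tripleGroup N := by
      have := conj_mem (k := 5) (by omega) (by omega) h1
      rwa [← conj_mul, conj_sTrans (b' := 6) (c' := 7), conj_sTrans (b' := 4) (c' := 7)] at this
      all_goals first | rfl | (simp only [Ballot]; omega) | omega
    have h3 := sTrans_mem_trans h1 (sTrans_mem_symm h2)
    have h4 : sTrans 5 6 * sTrans 6 7 ∈ tripleGroup N := by
      have := conj_mem (k := 6) (by omega) (by omega) h3
      rwa [← conj_mul, conj_sTrans (b' := 5) (c' := 6), conj_sTrans_fix (b := 6)] at this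
      all_goals first | rfl | (simp only [Ballot]; omega) | omega | decide
    have h5 := sTrans_mem_trans h3 (sTrans_mem_symm h4)
    have := conj_mem (k := 4) (by omega) (by omega) h5
    rwa [← conj_mul, conj_sTrans (b' := 4) (c' := 7), conj_sTrans (b' := 4) (c' := 6)] at this
    all_goals first | rfl | (simp only [Ballot]; omega)
  | succ j ih =>
    have := conj_mem (k := 7 + j) (by omega) (by omega) (ih (by omega))
    rwa [← conj_mul, conj_sTrans (b' := 4) (c' := 7 + (j + 1)), conj_sTrans (b' := 4) (c' := 6)]
      at this
    all_goals first | (simp only [Ballot]; omega) | omega | (simp only [swapVal]; grind)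

theorem s46_mem {N : ℕ} (hN : 8 ≤ N) (he : Even N) : sTrans 4 6 ∈ tripleGroup N := by
  have key : ∀ j, 7 + j ≤ N + 1 → (Even j → sProd 4 j ∈ tripleGroup N) ∧
      (¬ Even j → sTrans 4 6 * sProd 4 j ∈ tripleGroup N) := by
    intro j
    induction j with
    | zero => simp [sProd, one_mem]
    | succ j ih =>
      intro hj
      have ih := ih (by omega)
      have h := s4_s46_mem hN j (by omega)
      constructor
      · intro hev
        have := mul_mem h (ih.2 (by rwa [← Nat.even_add_one]))
        rwa [mul_assoc, ← mul_assoc (sTrans 4 6), sTrans_mul_self, one_mul] at this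
      · intro hev
        have := mul_mem (sTrans_mem_symm h) (ih.1 (by rwa [Nat.even_add_one, not_not] at hev))
        rwa [mul_assoc] at this
  have h1 := (key (N - 6) (by omega)).1 (by grind)
  exact (mul_mem_cancel_left h1).1 (cube_mem hN)

/-! ### All transpositions -/

theorem swap_mem_conj {N k : ℕ} (h1 : 1 ≤ k) (h2 : k < N) {x y : ℕ × ℕ × ℕ}
    (h : Equiv.swap x y ∈ tripleGroup N) :
    Equiv.swap (triplePerm N k x) (triplePerm N k y) ∈ tripleGroup N := by
  rw [Equiv.swap_apply_apply]
  exact conj_mem h1 h2 h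

theorem swap_mem_symm {N : ℕ} {x y : ℕ × ℕ × ℕ} (h : Equiv.swap x y ∈ tripleGroup N) :
    Equiv.swap y x ∈ tripleGroup N := by rwa [Equiv.swap_comm]

/-- The action on triples is transitive: any triple can be lowered step by step to `(2, 4, 6)`. -/
theorem ballot_induction {N : ℕ} (P : ℕ × ℕ × ℕ → Prop) (h0 : P (2, 4, 6))
    (hP : ∀ k x, 1 ≤ k → k < N → P x → P (triplePerm N k x)) (x : ℕ × ℕ × ℕ) (hx : Ballot N x) :
    P x := by
  obtain ⟨a, b, c⟩ := x
  induction hs : a + b + c using Nat.strong_induction_on generalizing a b c with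
  | _ s ih =>
    subst hs
    have hx' := hx
    simp only [Ballot] at hx'
    obtain ⟨h1, h2, h3, h4, h5, h6⟩ := hx'
    by_cases hc : 6 < c ∧ b < c - 1
    · have hB : Ballot N (a, b, c - 1) := by simp only [Ballot]; omega
      have := hP (c - 1) _ (by omega) (by omega) (ih _ (by omega) _ _ _ hB rfl)
      rwa [triplePerm_move hB hx (swapVal_ne (by omega) (by omega))
        (swapVal_ne (by omega) (by omega)) (by simp only [swapVal]; grind)] at this
    by_cases hb : 4 < b ∧ a < b - 1
    · have hB : Ballot N (a, b - 1, c) := by simp only [Ballot]; omega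
      have := hP (b - 1) _ (by omega) (by omega) (ih _ (by omega) _ _ _ hB rfl)
      rwa [triplePerm_move hB hx (swapVal_ne (by omega) (by omega))
        (by simp only [swapVal]; grind) (swapVal_ne (by omega) (by omega))] at this
    by_cases ha : 2 < a
    · have hB : Ballot N (a - 1, b, c) := by simp only [Ballot]; omega
      have := hP (a - 1) _ (by omega) (by omega) (ih _ (by omega) _ _ _ hB rfl)
      rwa [triplePerm_move hB hx (by simp only [swapVal]; grind)
        (swapVal_ne (by omega) (by omega)) (swapVal_ne (by omega) (by omega))] at this
    obtain ⟨rfl, rfl, rfl⟩ : a = 2 ∧ b = 4 ∧ c = 6 := by omega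
    exact h0

theorem swap_246_mem {N : ℕ} (hN : 8 ≤ N) (he : Even N) (x : ℕ × ℕ × ℕ) (hx : Ballot N x) :
    Equiv.swap (2, 4, 6) x ∈ tripleGroup N := by
  have hB : ∀ a b c, 2 ≤ a → 4 ≤ b → 6 ≤ c → a < b → b < c → c ≤ 7 → Ballot N (a, b, c) := by
    intro a b c _ _ _ _ _ _; simp only [Ballot]; omega
  have mv : ∀ k a b c a' b' c', Ballot N (a, b, c) → Ballot N (a', b', c') → swapVal k a = a' →
      swapVal k b = b' → swapVal k c = c' → triplePerm N k (a, b, c) = (a', b', c') :=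
    fun k a b c a' b' c' h h' => triplePerm_move h h'
  have hfix : ∀ k, k = 3 ∨ k = 5 ∨ 7 ≤ k → triplePerm N k (2, 4, 6) = (2, 4, 6) := by
    rintro k (rfl | rfl | hk)
    · exact triplePerm_fix fun _ h => by simp [Ballot, swapTriple, swapVal] at h
    · exact triplePerm_fix fun _ h => by simp [Ballot, swapTriple, swapVal] at h
    · exact triplePerm_move (hB _ _ _ (by omega) (by omega) (by omega) (by omega) (by omega)
        (by omega)) (hB _ _ _ (by omega) (by omega) (by omega) (by omega) (by omega)
        (by omega)) (swapVal_ne (by omega) (by omega)) (swapVal_ne (by omega) (by omega))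
        (swapVal_ne (by omega) (by omega))
  have r0 : Equiv.swap ((2, 4, 6) : ℕ × ℕ × ℕ) (3, 4, 6) ∈ tripleGroup N := s46_mem hN he
  have r1 : Equiv.swap ((2, 5, 6) : ℕ × ℕ × ℕ) (3, 5, 6) ∈ tripleGroup N := by
    have := swap_mem_conj (k := 4) (by omega) (by omega) r0
    rwa [mv 4 2 4 6 2 5 6, mv 4 3 4 6 3 5 6] at this
    all_goals first | rfl | (apply hB <;> omega)
  have r2 : Equiv.swap ((2, 5, 6) : ℕ × ℕ × ℕ) (4, 5, 6) ∈ tripleGroup N := by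
    have := swap_mem_conj (k := 3) (by omega) (by omega) r1
    rwa [mv 3 2 5 6 2 5 6, mv 3 3 5 6 4 5 6] at this
    all_goals first | rfl | (apply hB <;> omega)
  have r3 : Equiv.swap ((2, 4, 6) : ℕ × ℕ × ℕ) (4, 5, 6) ∈ tripleGroup N := by
    have := swap_mem_conj (k := 4) (by omega) (by omega) r2
    rwa [mv 4 2 5 6 2 4 6, triplePerm_fix (x := (4, 5, 6))
      (fun _ h => by simp [Ballot, swapTriple, swapVal] at h)] at this
    all_goals first | rfl | (apply hB <;> omega)
  have r4 := SubmonoidClass.swap_mem_trans _ r3 (swap_mem_symm r2)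
  have r5 : Equiv.swap ((2, 4, 7) : ℕ × ℕ × ℕ) (2, 5, 7) ∈ tripleGroup N := by
    have := swap_mem_conj (k := 6) (by omega) (by omega) r4
    rwa [mv 6 2 4 6 2 4 7, mv 6 2 5 6 2 5 7] at this
    all_goals first | rfl | (apply hB <;> omega)
  have r6 : Equiv.swap ((2, 4, 7) : ℕ × ℕ × ℕ) (2, 6, 7) ∈ tripleGroup N := by
    have := swap_mem_conj (k := 5) (by omega) (by omega) r5
    rwa [mv 5 2 4 7 2 4 7, mv 5 2 5 7 2 6 7] at this
    all_goals first | rfl | (apply hB <;> omega)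
  have f67 : triplePerm N 6 (2, 6, 7) = (2, 6, 7) :=
    triplePerm_fix fun _ h => by simp [Ballot, swapTriple, swapVal] at h
  have r7 : Equiv.swap ((2, 4, 6) : ℕ × ℕ × ℕ) (2, 6, 7) ∈ tripleGroup N := by
    have := swap_mem_conj (k := 6) (by omega) (by omega) r6
    rwa [mv 6 2 4 7 2 4 6, f67] at this
    all_goals first | rfl | (apply hB <;> omega)
  -- For each `k`, some element of the class of `(2, 4, 6)` stays in that class under `t_k`.
  have stay : ∀ k, 1 ≤ k → ∃ y, Equiv.swap (2, 4, 6) y ∈ tripleGroup N ∧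
      Equiv.swap (2, 4, 6) (triplePerm N k y) ∈ tripleGroup N := by
    intro k hk
    have rr : Equiv.swap ((2, 4, 6) : ℕ × ℕ × ℕ) (2, 4, 6) ∈ tripleGroup N := by
      rw [Equiv.swap_self]; exact one_mem _
    obtain rfl | rfl | rfl | rfl | hk : k = 1 ∨ k = 2 ∨ k = 4 ∨ k = 6 ∨
      (k = 3 ∨ k = 5 ∨ 7 ≤ k) := by omega
    · refine ⟨_, rr, ?_⟩
      rwa [triplePerm_fix (fun _ h => by simp [Ballot, swapTriple, swapVal] at h)]
    · refine ⟨_, rr, ?_⟩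
      rwa [mv 2 2 4 6 3 4 6]
      all_goals first | rfl | (apply hB <;> omega)
    · refine ⟨_, rr, ?_⟩
      rwa [mv 4 2 4 6 2 5 6]
      all_goals first | rfl | (apply hB <;> omega)
    · exact ⟨_, r7, by rwa [f67]⟩
    · exact ⟨_, rr, by rwa [hfix k hk]⟩
  refine ballot_induction (fun y => Equiv.swap (2, 4, 6) y ∈ tripleGroup N) ?_ ?_ x hx
  · rw [Equiv.swap_self]; exact one_mem _
  · intro k y h1 h2 hy
    obtain ⟨z, hz, hz'⟩ := stay k h1
    exact SubmonoidClass.swap_mem_trans _ hz'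
      (swap_mem_conj h1 h2 (SubmonoidClass.swap_mem_trans _ (swap_mem_symm hz) hy))

theorem swap_mem_tripleGroup {N : ℕ} (hN : 8 ≤ N) (he : Even N) (x y : ℕ × ℕ × ℕ)
    (hx : Ballot N x) (hy : Ballot N y) : Equiv.swap x y ∈ tripleGroup N :=
  SubmonoidClass.swap_mem_trans _ (swap_mem_symm (swap_246_mem hN he x hx))
    (swap_246_mem hN he y hy)

/-! ### Tableaux and their second rows -/

/-- The first three entries of the second row of a tableau. -/
def SYT.secondRow {μ : YoungDiagram} (T : SYT μ) : ℕ × ℕ × ℕ :=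
  (T.entry 1 0, T.entry 1 1, T.entry 1 2)

section shape

variable {μ : YoungDiagram} {r : ℕ}

theorem mem_shape (hr0 : μ.rowLen 0 = r) (hr1 : μ.rowLen 1 = 3) (hr2 : μ.rowLen 2 = 0)
    (i j : ℕ) : (i, j) ∈ μ ↔ (i = 0 ∧ j < r) ∨ (i = 1 ∧ j < 3) := by
  rw [YoungDiagram.mem_iff_lt_rowLen]
  obtain rfl | rfl | hi : i = 0 ∨ i = 1 ∨ 2 ≤ i := by omega
  · simp [hr0]
  · simp [hr1]
  · have := μ.rowLen_anti 2 i hi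
    omega

theorem entry_injOn (T : SYT μ) : Set.InjOn (fun c : ℕ × ℕ => T.entry c.1 c.2) μ.cells := by
  rw [← Finset.card_image_iff, T.image_eq]
  simp [YoungDiagram.card]

theorem entry_inj (T : SYT μ) {i j i' j' : ℕ} (h : (i, j) ∈ μ) (h' : (i', j') ∈ μ)
    (he : T.entry i j = T.entry i' j') : i = i' ∧ j = j' := by
  have := entry_injOn T (x₁ := (i, j)) (x₂ := (i', j')) (by simpa using h) (by simpa using h') he
  simpa using this

theorem entry_mem_Icc (T : SYT μ) {i j : ℕ} (h : (i, j) ∈ μ) :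
    1 ≤ T.entry i j ∧ T.entry i j ≤ μ.card := by
  have : T.entry i j ∈ μ.cells.image (fun c => T.entry c.1 c.2) :=
    Finset.mem_image.2 ⟨(i, j), by simpa using h, rfl⟩
  rwa [T.image_eq, Finset.mem_Icc] at this

theorem exists_entry (T : SYT μ) {v : ℕ} (h1 : 1 ≤ v) (h2 : v ≤ μ.card) :
    ∃ i j, (i, j) ∈ μ ∧ T.entry i j = v := by
  have : v ∈ μ.cells.image (fun c => T.entry c.1 c.2) := by
    rw [T.image_eq, Finset.mem_Icc]; exact ⟨h1, h2⟩
  obtain ⟨⟨i, j⟩, hc, he⟩ := Finset.mem_image.1 this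
  exact ⟨i, j, by simpa using hc, he⟩

theorem row_lt_iff (T : SYT μ) {i j j' : ℕ} (h : (i, j) ∈ μ) (h' : (i, j') ∈ μ) :
    T.entry i j < T.entry i j' ↔ j < j' := by
  refine ⟨fun hl => ?_, fun hl => T.row_strict i j j' hl h'⟩
  by_contra hn
  rcases Nat.lt_or_eq_of_le (not_lt.1 hn) with hlt | rfl
  · have := T.row_strict i j' j hlt h
    omega
  · omega

theorem secondRow_ballot (hr : 3 ≤ r)
    (hS : ∀ i j, (i, j) ∈ μ ↔ (i = 0 ∧ j < r) ∨ (i = 1 ∧ j < 3)) (T : SYT μ) :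
    Ballot μ.card T.secondRow := by
  have m0 : ∀ j < 3, (0, j) ∈ μ := fun j hj => (hS _ _).2 (by omega)
  have m1 : ∀ j < 3, (1, j) ∈ μ := fun j hj => (hS _ _).2 (by omega)
  have a1 := T.row_strict 0 0 1 (by omega) (m0 1 (by omega))
  have a2 := T.row_strict 0 1 2 (by omega) (m0 2 (by omega))
  have b1 := T.row_strict 1 0 1 (by omega) (m1 1 (by omega))
  have b2 := T.row_strict 1 1 2 (by omega) (m1 2 (by omega))
  have c0 := T.col_strict 0 1 0 (by omega) (m1 0 (by omega))
  have c1 := T.col_strict 0 1 1 (by omega) (m1 1 (by omega))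
  have c2 := T.col_strict 0 1 2 (by omega) (m1 2 (by omega))
  have p := entry_mem_Icc T (m0 0 (by omega))
  have q := entry_mem_Icc T (m1 2 (by omega))
  have ne : ∀ j < 3, ∀ j' < 3, T.entry 0 j ≠ T.entry 1 j' := fun j hj j' hj' he => by
    have := entry_inj T (m0 j hj) (m1 j' hj') he
    omega
  have n1 := ne 1 (by omega) 0 (by omega)
  have n2 := ne 2 (by omega) 0 (by omega)
  have n3 := ne 2 (by omega) 1 (by omega)
  simp only [Ballot, SYT.secondRow]
  omega

/-- If `k` lies directly above `k + 1` in column `j`, then the values `1, …, k` occupy at most the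
first `j + 1` boxes of row `0` and the first `j` boxes of row `1`. Hence interchanging `k` and
`k + 1` violates the bound `2 * j + 2 ≤ T.entry 1 j`, the `j`-th condition in `Ballot`. -/
theorem vertical_pair_le (hS : ∀ i j, (i, j) ∈ μ ↔ (i = 0 ∧ j < r) ∨ (i = 1 ∧ j < 3))
    (hr : 3 ≤ r) (T : SYT μ) {j k : ℕ} (hj : j < 3) (h0 : T.entry 0 j = k)
    (h1 : T.entry 1 j = k + 1) : k ≤ 2 * j + 1 := by
  have m0 : (0, j) ∈ μ := (hS _ _).2 (by omega)
  have m1 : (1, j) ∈ μ := (hS _ _).2 (by omega)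
  have hle := (entry_mem_Icc T m0).2
  have hsub : Finset.Icc 1 k ⊆
      (Finset.range (j + 1)).image (T.entry 0) ∪ (Finset.range j).image (T.entry 1) := by
    intro v hv
    rw [Finset.mem_Icc] at hv
    obtain ⟨i, l, hm, he⟩ := exists_entry T hv.1 (by omega)
    simp only [Finset.mem_union, Finset.mem_image, Finset.mem_range]
    rcases (hS _ _).1 hm with ⟨rfl, hl⟩ | ⟨rfl, hl⟩
    · refine Or.inl ⟨l, ?_, he⟩
      have := row_lt_iff T m0 hm
      omega
    · refine Or.inr ⟨l, ?_, he⟩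
      have := row_lt_iff T hm m1
      omega
  have hc := (Finset.card_le_card hsub).trans (Finset.card_union_le _ _)
  have hc1 := Finset.card_image_le (s := Finset.range (j + 1)) (f := T.entry 0)
  have hc2 := Finset.card_image_le (s := Finset.range j) (f := T.entry 1)
  simp only [Nat.card_Icc, Finset.card_range] at hc hc1 hc2
  omega

theorem swapVal_lt {k x y : ℕ} (h : x < y) (hn : ¬ (x = k ∧ y = k + 1)) :
    swapVal k x < swapVal k y := by
  unfold swapVal; split_ifs <;> omega

/-- If interchanging `k` and `k + 1` changes the second row into another admissible one, then the
interchange produces a standard tableau. -/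
theorem exists_swapped (hS : ∀ i j, (i, j) ∈ μ ↔ (i = 0 ∧ j < r) ∨ (i = 1 ∧ j < 3))
    (hr : 3 ≤ r) (T : SYT μ) {k : ℕ} (hk : 1 ≤ k) (hk' : k < μ.card)
    (hB : Ballot μ.card (swapTriple k T.secondRow))
    (hne : swapTriple k T.secondRow ≠ T.secondRow) :
    ∃ T' : SYT μ, T'.entry = fun i j => swapVal k (T.entry i j) := by
  simp only [Ballot, swapTriple, SYT.secondRow] at hB
  refine ⟨⟨fun i j => swapVal k (T.entry i j), ?_, ?_, ?_, ?_⟩, rfl⟩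
  · intro i j h
    simp only [T.zero_outside i j h]
    exact swapVal_ne (by omega) (by omega)
  · intro i j1 j2 hj h
    rcases (hS _ _).1 h with ⟨rfl, hl⟩ | ⟨rfl, hl⟩
    · refine swapVal_lt (T.row_strict 0 j1 j2 hj h) ?_
      rintro ⟨e1, e2⟩
      -- With `k` and `k + 1` both in row `0`, the second row would be unchanged.
      have hfix : ∀ l < 3, swapVal k (T.entry 1 l) = T.entry 1 l := by
        intro l hl3
        have ml : (1, l) ∈ μ := (hS _ _).2 (by omega)
        have mj : (0, j1) ∈ μ := (hS _ _).2 (by omega)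
        refine swapVal_ne (fun he => ?_) (fun he => ?_)
        · have := entry_inj T ml mj (he.trans e1.symm)
          omega
        · have := entry_inj T ml h (he.trans e2.symm)
          omega
      apply hne
      simp only [swapTriple, SYT.secondRow, hfix 0 (by omega), hfix 1 (by omega),
        hfix 2 (by omega)]
    · obtain ⟨rfl, rfl⟩ | ⟨rfl, rfl⟩ | ⟨rfl, rfl⟩ :
          (j1 = 0 ∧ j2 = 1) ∨ (j1 = 0 ∧ j2 = 2) ∨ (j1 = 1 ∧ j2 = 2) := by omega
      all_goals omega
  · intro i1 i2 j hi h
    obtain ⟨rfl, rfl, hj⟩ : i1 = 0 ∧ i2 = 1 ∧ j < 3 := by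
      have := (hS _ _).1 h
      omega
    refine swapVal_lt (T.col_strict 0 1 j hi h) ?_
    rintro ⟨e1, e2⟩
    have hle := vertical_pair_le hS hr T hj e1 e2
    have hsw : swapVal k (T.entry 1 j) = k := by rw [e2]; simp [swapVal]
    obtain rfl | rfl | rfl : j = 0 ∨ j = 1 ∨ j = 2 := by omega
    all_goals omega
  · ext v
    constructor
    · intro hv
      obtain ⟨⟨i, j⟩, hc, rfl⟩ := Finset.mem_image.1 hv
      have := entry_mem_Icc T (i := i) (j := j) (by simpa using hc)
      rw [Finset.mem_Icc]
      simp only [swapVal]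
      split_ifs <;> omega
    · intro hv
      rw [Finset.mem_Icc] at hv
      have hw : 1 ≤ swapVal k v ∧ swapVal k v ≤ μ.card := by
        unfold swapVal; split_ifs <;> omega
      obtain ⟨i, j, hm, he⟩ := exists_entry T hw.1 hw.2
      refine Finset.mem_image.2 ⟨(i, j), by simpa using hm, ?_⟩
      simp only [he]
      exact swapVal_invol k v

theorem secondRow_bk (hS : ∀ i j, (i, j) ∈ μ ↔ (i = 0 ∧ j < r) ∨ (i = 1 ∧ j < 3))
    (hr : 3 ≤ r) (T : SYT μ) {k : ℕ} (hk : 1 ≤ k) (hk' : k < μ.card) :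
    (BK μ k T).secondRow = triplePerm μ.card k T.secondRow := by
  change (bkFun μ k T).secondRow = tripleFun μ.card k T.secondRow
  by_cases h : ∃ T' : SYT μ, T'.entry = fun i j => swapVal k (T.entry i j)
  · have e : (bkFun μ k T).secondRow = swapTriple k T.secondRow := by
      simp only [SYT.secondRow, bkFun_pos h, swapTriple]
    have hB := secondRow_ballot hr hS (bkFun μ k T)
    rw [e] at hB
    rw [e, tripleFun, if_pos ⟨secondRow_ballot hr hS T, hB⟩]
  · rw [bkFun_neg h]
    refine (triplePerm_fix fun _ hB => ?_).symm
    by_contra hne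
    exact h (exists_swapped hS hr T hk hk' hB hne)

/-- A tableau is determined by its second row: row `0` enumerates the remaining values in
increasing order. -/
theorem secondRow_injective (hS : ∀ i j, (i, j) ∈ μ ↔ (i = 0 ∧ j < r) ∨ (i = 1 ∧ j < 3)) :
    Function.Injective (SYT.secondRow (μ := μ)) := by
  have range_eq : ∀ T : SYT μ, Set.range (fun l : Fin r => T.entry 0 l) =
      {v | 1 ≤ v ∧ v ≤ μ.card ∧ ∀ j < 3, T.entry 1 j ≠ v} := by
    intro T
    ext v
    constructor
    · rintro ⟨l, rfl⟩
      have m : (0, l.1) ∈ μ := (hS _ _).2 (by omega)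
      refine ⟨(entry_mem_Icc T m).1, (entry_mem_Icc T m).2, fun j hj he => ?_⟩
      have := entry_inj T ((hS _ _).2 (by omega)) m he
      omega
    · rintro ⟨h1, h2, h3⟩
      obtain ⟨i, j, hm, he⟩ := exists_entry T h1 h2
      rcases (hS _ _).1 hm with ⟨rfl, hl⟩ | ⟨rfl, hl⟩
      · exact ⟨⟨j, hl⟩, he⟩
      · exact absurd he (h3 j hl)
  have mono : ∀ T : SYT μ, StrictMono (fun l : Fin r => T.entry 0 l) := fun T l l' h =>
    T.row_strict 0 l l' h ((hS _ _).2 (by omega))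
  intro T T' h
  simp only [SYT.secondRow, Prod.mk.injEq] at h
  have h1 : ∀ j < 3, T.entry 1 j = T'.entry 1 j := by
    intro j hj
    obtain rfl | rfl | rfl : j = 0 ∨ j = 1 ∨ j = 2 := by omega
    exacts [h.1, h.2.1, h.2.2]
  have h0 : (fun l : Fin r => T.entry 0 l) = fun l : Fin r => T'.entry 0 l := by
    refine ((mono T).range_inj (mono T')).1 ?_
    rw [range_eq, range_eq]
    ext v
    simp only [Set.mem_ofPred_eq]
    constructor
    · rintro ⟨a, b, c⟩
      exact ⟨a, b, fun j hj => by rw [← h1 j hj]; exact c j hj⟩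
    · rintro ⟨a, b, c⟩
      exact ⟨a, b, fun j hj => by rw [h1 j hj]; exact c j hj⟩
  apply SYT.ext'
  funext i j
  by_cases hm : (i, j) ∈ μ
  · rcases (hS _ _).1 hm with ⟨rfl, hl⟩ | ⟨rfl, hl⟩
    · exact congrFun h0 ⟨j, hl⟩
    · exact h1 j hl
  · rw [T.zero_outside i j hm, T'.zero_outside i j hm]

/-- Every element of the group on triples is induced by an element of the group on tableaux. -/
theorem exists_lift (hS : ∀ i j, (i, j) ∈ μ ↔ (i = 0 ∧ j < r) ∨ (i = 1 ∧ j < 3))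
    (hr : 3 ≤ r) {g : Equiv.Perm (ℕ × ℕ × ℕ)} (hg : g ∈ tripleGroup μ.card) :
    ∃ h ∈ BKgroup μ, ∀ T : SYT μ, (h T).secondRow = g T.secondRow := by
  induction hg using Subgroup.closure_induction with
  | mem x hx =>
    obtain ⟨k, hk, rfl⟩ := hx
    rw [Set.mem_Icc] at hk
    exact ⟨BK μ k, Subgroup.subset_closure ⟨k, hk, rfl⟩,
      fun T => secondRow_bk hS hr T hk.1 (by omega)⟩
  | one => exact ⟨1, one_mem _, fun T => rfl⟩
  | mul x y _ _ ihx ihy =>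
    obtain ⟨h, hh, e⟩ := ihx
    obtain ⟨h', hh', e'⟩ := ihy
    exact ⟨h * h', mul_mem hh hh', fun T => by simp [e, e']⟩
  | inv x _ ih =>
    obtain ⟨h, hh, e⟩ := ih
    refine ⟨h⁻¹, inv_mem hh, fun T => ?_⟩
    rw [Equiv.Perm.eq_inv_iff_eq, ← e, ← Equiv.Perm.mul_apply, mul_inv_cancel, Equiv.Perm.one_apply]

end shape

/-- Theorem. For every `m ≥ 2`, if `μ` is the partition `(2^m + 1, 3)` of
`n = 2^m + 4`, then the image of `C_n` in the permutation group of `SYT(μ)` (the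
subgroup generated by the Bender–Knuth involutions `t_1, …, t_{n-1}`) is the full
symmetric group of `SYT(μ)`. -/
theorem image_full_symmetric (m n : ℕ) (hm : 2 ≤ m) (hn : n = 2 ^ m + 4)
    (μ : YoungDiagram) (hμ : μ.card = n)
    (hr0 : μ.rowLen 0 = 2 ^ m + 1) (hr1 : μ.rowLen 1 = 3) (hr2 : μ.rowLen 2 = 0) :
    BKgroup μ = ⊤ := by
  classical
  have hpow : 4 ≤ 2 ^ m := by
    calc 4 = 2 ^ 2 := by norm_num
      _ ≤ 2 ^ m := Nat.pow_le_pow_right (by norm_num) hm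
  have hS := mem_shape hr0 hr1 hr2
  have hr : 3 ≤ 2 ^ m + 1 := by omega
  have heven : Even μ.card := by
    rw [hμ, hn]
    exact ((even_two).pow_of_ne_zero (by omega)).add (by decide)
  have hinj := secondRow_injective hS
  have hfin : Finite (SYT μ) := by
    refine Finite.of_injective (β := Fin (μ.card + 1) × Fin (μ.card + 1) × Fin (μ.card + 1))
      (fun T => (Fin.ofNat _ T.secondRow.1, Fin.ofNat _ T.secondRow.2.1,
        Fin.ofNat _ T.secondRow.2.2)) fun T T' h => hinj ?_
    have h1 := secondRow_ballot hr hS T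
    have h2 := secondRow_ballot hr hS T'
    simp only [Ballot] at h1 h2
    simp only [Prod.mk.injEq, Fin.ext_iff, Fin.ofNat] at h
    rw [Nat.mod_eq_of_lt (by omega), Nat.mod_eq_of_lt (by omega), Nat.mod_eq_of_lt (by omega),
      Nat.mod_eq_of_lt (by omega), Nat.mod_eq_of_lt (by omega), Nat.mod_eq_of_lt (by omega)] at h
    exact Prod.ext h.1 (Prod.ext h.2.1 h.2.2)
  rw [eq_top_iff, ← Equiv.Perm.closure_isSwap, Subgroup.closure_le]
  rintro _ ⟨A, B, -, rfl⟩
  obtain ⟨h, hh, e⟩ := exists_lift hS hr (swap_mem_tripleGroup (by omega) heven A.secondRow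
    B.secondRow (secondRow_ballot hr hS A) (secondRow_ballot hr hS B))
  have : h = Equiv.swap A B := by
    ext1 T
    apply hinj
    rw [e, hinj.map_swap]
  exact this ▸ hh
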